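/- Let d, m ∈ ℕ, let F = 𝓛(ξ) ∈ 𝔉_d, and let t₁,…,t_m ∈ ℝ^d be such that for each j = 1,…,m the distribution of the random variable ⟨ξ,t_j⟩ is either non-degenerate (i.e., not a Dirac measure) or equal to the Dirac measure at 0. Then there exists a constant C = c(F, t₁,…,t_m) > 0, depending only on F and t₁,…,t_m, such that for every n ∈ ℕ and every X ∈ 𝔛(t₁,…,t_m) one has |F^n{X} − F^{n+1}{X}| ≤ C · n^{−1/2}. -/

import Mathlib

open MeasureTheory RealInnerProductSpace
open scoped ENNReal

noncomputable section

abbrev Euc (d : ℕ) := EuclideanSpace ℝ (Fin d)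

/-- Convolution of two measures on an additive structure. -/
def mconv {α : Type*} [MeasurableSpace α] [Add α] (μ ν : Measure α) : Measure α :=
  (μ.prod ν).map (fun p => p.1 + p.2)

/-- Convolution power `μ^{*n}`, with `μ^{*0}` the Dirac measure at `0`. -/
def convPow {α : Type*} [MeasurableSpace α] [AddMonoid α] (μ : Measure α) : ℕ → Measure α
  | 0 => Measure.dirac 0
  | n + 1 => mconv (convPow μ n) μ

/-- Convolution product of a finite family of measures. -/
def convProd {α : Type*} [MeasurableSpace α] [AddMonoid α] :
    ∀ {n : ℕ}, (Fin n → Measure α) → Measure α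
  | 0, _ => Measure.dirac 0
  | n + 1, G => mconv (convProd (fun i : Fin n => G i.castSucc)) (G (Fin.last n))

/-- The compound Poisson measure `e(a·μ) = e^{-a} ∑_k a^k μ^{*k}/k!`. -/
def cpois {α : Type*} [MeasurableSpace α] [AddMonoid α] (a : ℝ) (μ : Measure α) : Measure α :=
  Measure.sum fun k : ℕ =>
    (ENNReal.ofReal (Real.exp (-a) * a ^ k / k.factorial)) • convPow μ k

/-- A measure is symmetric if it is invariant under `x ↦ -x`. -/
def IsSymmMeasure {d : ℕ} (μ : Measure (Euc d)) : Prop :=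
  μ.map (fun x => -x) = μ

/-- Characteristic function of a measure on `ℝ^d`. -/
def charFn {d : ℕ} (μ : Measure (Euc d)) (t : Euc d) : ℂ :=
  ∫ x, Complex.exp ((⟪t, x⟫ : ℂ) * Complex.I) ∂μ

/-- Characteristic function of a measure on `ℝ`. -/
def charFn1 (μ : Measure ℝ) (t : ℝ) : ℂ :=
  ∫ x, Complex.exp (((t * x : ℝ) : ℂ) * Complex.I) ∂μ

/-- Convex polyhedra determined by the directions `t 1, …, t m`. -/
def polyhedraOn {d m : ℕ} (t : Fin m → Euc d) : Set (Set (Euc d)) :=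
  {X | ∃ a b : Fin m → EReal,
    X = {x | ∀ j, a j ≤ ((⟪x, t j⟫ : ℝ) : EReal) ∧ ((⟪x, t j⟫ : ℝ) : EReal) ≤ b j}}

/-- The collection `𝔛_m` of convex polyhedra determined by `m` pairs of parallel hyperplanes. -/
def polyhedra (d m : ℕ) : Set (Set (Euc d)) :=
  {X | ∃ t : Fin m → Euc d, X ∈ polyhedraOn t}

/-- The distance `ρ_m(G,H) = sup_{X ∈ 𝔛_m} |G{X} - H{X}|`. -/
def rhoPoly {d : ℕ} (m : ℕ) (G H : Measure (Euc d)) : ℝ :=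
  ⨆ X ∈ polyhedra d m, |(G X).toReal - (H X).toReal|

/-- The Lévy concentration function `Q(μ, b) = sup_x μ[x, x+b]`. -/
def concFn (μ : Measure ℝ) (b : ℝ) : ℝ :=
  ⨆ x : ℝ, (μ (Set.Icc x (x + b))).toReal

/-- `q(H, X) = inf_{‖t‖=1} Q(𝓛(⟨ξ,t⟩), λ{⟨x,t⟩ : x ∈ X})` where `H = 𝓛(ξ)`. -/
def qFn {d : ℕ} (H : Measure (Euc d)) (X : Set (Euc d)) : ℝ :=
  ⨅ t ∈ {t : Euc d | ‖t‖ = 1},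
    concFn (H.map fun x => ⟪x, t⟫) (volume ((fun x => ⟪x, t⟫) '' X)).toReal

/-- The uniform (Kolmogorov) distance on `ℝ^d`. -/
def kolmDist {d : ℕ} (G H : Measure (Euc d)) : ℝ :=
  ⨆ x : Euc d, |(G {y | ∀ i, y i ≤ x i}).toReal - (H {y | ∀ i, y i ≤ x i}).toReal|

/-- The uniform (Kolmogorov) distance on `ℝ`. -/
def kolmDist1 (G H : Measure ℝ) : ℝ :=
  ⨆ x : ℝ, |(G (Set.Iic x)).toReal - (H (Set.Iic x)).toReal|

end

/-!
By exchangeability, the event that a sum of `n + 1` i.i.d. summands lies in `X` has the same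
covariance `δ` with each of the `n + 1` independent events that a given summand lies in `A`. One
event cannot be correlated with many independent ones: by Cauchy–Schwarz
`((n + 1) δ)² ≤ (n + 1) / 16`, so conditioning the last step on `A` changes the probability that the
sum lies in `X` by `O(n^{-1/2})`.

Condition the last step on a bounded set `A` of positive mass. It then carries the partial sum
across the boundary of the polyhedron `X` only if, in some direction `t j`, the partial sum is
within bounded distance of an endpoint of the slab. In a non-degenerate direction this has
probability `O(n^{-1/2})`: for half-lines `A` and `X`, the covariance `δ` dominates a multiple of
the concentration function. In a direction with `⟪ξ, t j⟫ = 0` a.s., confining `A` to the support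
prevents any crossing.
-/

section

open ProbabilityTheory Set Metric
open scoped Finset

section Correlation

variable {Ω : Type*} [MeasurableSpace Ω] {P : Measure Ω}

theorem sq_covariance_le [IsFiniteMeasure P] {X Y : Ω → ℝ} (hX : MemLp X 2 P) (hY : MemLp Y 2 P) :
    cov[X, Y; P] ^ 2 ≤ Var[X; P] * Var[Y; P] := by
  have h_nonneg (c : ℝ) : 0 ≤ Var[X; P] * (c * c) + 2 * cov[X, Y; P] * c + Var[Y; P] := by
    calc 0 ≤ Var[c • X + Y; P] := variance_nonneg _ _
      _ = Var[X; P] * (c * c) + 2 * cov[X, Y; P] * c + Var[Y; P] := by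
        rw [variance_add (hX.const_smul c) hY, variance_smul, covariance_smul_left]
        ring
  have h_discrim := discrim_le_zero h_nonneg
  rw [discrim] at h_discrim
  linarith

theorem memLp_indicator_one [IsFiniteMeasure P] {E : Set Ω} (hE : MeasurableSet E) :
    MemLp (E.indicator (1 : Ω → ℝ)) 2 P :=
  (memLp_const 1).indicator hE

theorem covariance_indicator_one [IsProbabilityMeasure P] {E H : Set Ω} (hE : MeasurableSet E)
    (hH : MeasurableSet H) :
    cov[E.indicator (1 : Ω → ℝ), H.indicator 1; P] = P.real (E ∩ H) - P.real E * P.real H := by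
  rw [covariance_eq_sub (memLp_indicator_one hE) (memLp_indicator_one hH),
    ← inter_indicator_one, integral_indicator_one (hE.inter hH), integral_indicator_one hE,
    integral_indicator_one hH]

theorem variance_indicator_one_le [IsProbabilityMeasure P] {E : Set Ω} (hE : MeasurableSet E) :
    Var[E.indicator (1 : Ω → ℝ); P] ≤ 1 / 4 := by
  have h_mem (ω : Ω) : E.indicator (1 : Ω → ℝ) ω ∈ Icc (0 : ℝ) 1 := by
    by_cases hω : ω ∈ E <;> simp [hω]
  calc Var[E.indicator (1 : Ω → ℝ); P] ≤ ((1 - 0) / 2) ^ 2 :=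
        variance_le_sq_of_bounded (.of_forall h_mem) (measurable_one.indicator hE).aemeasurable
    _ = 1 / 4 := by norm_num

theorem sq_sum_measureReal_inter_sub_mul_le {ι : Type*} {E : Set Ω} {H : ι → Set Ω}
    {s : Finset ι} (hE : MeasurableSet E) (hH : ∀ i, MeasurableSet (H i))
    (h_indep : iIndepSet H P) :
    (∑ i ∈ s, (P.real (E ∩ H i) - P.real E * P.real (H i))) ^ 2 ≤ #s / 16 := by
  have := h_indep.isProbabilityMeasure
  have hH_memLp (i : ι) (_ : i ∈ s) : MemLp ((H i).indicator (1 : Ω → ℝ)) 2 P :=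
    memLp_indicator_one (hH i)
  have h_var : Var[∑ i ∈ s, (H i).indicator (1 : Ω → ℝ); P] ≤ #s / 4 := by
    rw [IndepFun.variance_sum hH_memLp fun i _ j _ hij =>
      h_indep.iIndepFun_indicator.indepFun hij]
    simpa [div_eq_mul_inv] using
      Finset.sum_le_card_nsmul s _ _ fun i _ => variance_indicator_one_le (P := P) (hH i)
  calc (∑ i ∈ s, (P.real (E ∩ H i) - P.real E * P.real (H i))) ^ 2
      = cov[E.indicator (1 : Ω → ℝ), ∑ i ∈ s, (H i).indicator 1; P] ^ 2 := by
        rw [covariance_sum_right' hH_memLp (memLp_indicator_one hE)]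
        simp only [covariance_indicator_one hE (hH _)]
    _ ≤ Var[E.indicator (1 : Ω → ℝ); P] * Var[∑ i ∈ s, (H i).indicator (1 : Ω → ℝ); P] :=
        sq_covariance_le (memLp_indicator_one hE) (memLp_finsetSum' s hH_memLp)
    _ ≤ 1 / 4 * (#s / 4) := by
        gcongr
        · exact variance_nonneg _ _
        · exact variance_indicator_one_le hE
    _ = #s / 16 := by ring

end Correlation

section ConvPow

theorem convPow_succ {M : Type*} [AddMonoid M] [MeasurableSpace M] (μ : Measure M) (n : ℕ) :
    convPow μ (n + 1) = convPow μ n ∗ μ := rfl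

theorem measureReal_conv_restrict {M : Type*} [AddMonoid M] [MeasurableSpace M]
    [MeasurableAdd₂ M] (κ μ : Measure M) [SFinite κ] [SFinite μ] {A X : Set M}
    (hX : MeasurableSet X) :
    (κ ∗ μ.restrict A).real X =
      (κ.prod μ).real ((fun p => p.1 + p.2) ⁻¹' X ∩ univ ×ˢ A) := by
  rw [Measure.conv, map_measureReal_apply measurable_add hX, ← Measure.restrict_univ (μ := κ),
    Measure.prod_restrict, measureReal_restrict_apply (measurable_add hX), Measure.restrict_univ]

section AddMonoid

variable {M : Type*} [AddMonoid M] [MeasurableSpace M] [MeasurableAdd₂ M] {μ : Measure M}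
  [IsProbabilityMeasure μ]

instance isProbabilityMeasure_convPow (n : ℕ) : IsProbabilityMeasure (convPow μ n) := by
  induction n with
  | zero => exact Measure.dirac.isProbabilityMeasure
  | succ n ih => rw [convPow_succ]; infer_instance

theorem map_convPow {M' : Type*} [AddMonoid M'] [MeasurableSpace M'] [MeasurableAdd₂ M']
    (T : M →+ M') (hT : Measurable T) (n : ℕ) :
    (convPow μ n).map T = convPow (μ.map T) n := by
  induction n with
  | zero => simp [convPow, Measure.map_dirac' hT]
  | succ n ih => rw [convPow_succ, convPow_succ, Measure.map_conv_addMonoidHom T hT, ih]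

end AddMonoid

section AddCommMonoid

variable {M : Type*} [AddCommMonoid M] [MeasurableSpace M] [MeasurableAdd₂ M] {μ : Measure M}
  [IsProbabilityMeasure μ]

section IndependentSummands

variable {Ω : Type*} [MeasurableSpace Ω] {P : Measure Ω} {ι : Type*} {ξ : ι → Ω → M}

theorem hasLaw_sum_convPow (h_indep : iIndepFun ξ P) (hξ : ∀ i, Measurable (ξ i))
    (hlaw : ∀ i, HasLaw (ξ i) μ P) (s : Finset ι) :
    HasLaw (∑ i ∈ s, ξ i) (convPow μ #s) P := by
  classical
  have := h_indep.isProbabilityMeasure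
  induction s using Finset.induction_on with
  | empty => exact hasLaw_dirac_of_ae_eq (by simp [Filter.EventuallyEq])
  | insert i s his ih =>
    rw [Finset.sum_insert his, Finset.card_insert_of_notMem his, convPow_succ, add_comm]
    exact (h_indep.indepFun_finsetSum_of_notMem hξ his).hasLaw_add ih (hlaw i)

theorem measureReal_sum_mem_inter_mem (h_indep : iIndepFun ξ P) (hξ : ∀ i, Measurable (ξ i))
    (hlaw : ∀ i, HasLaw (ξ i) μ P) {s : Finset ι} {i : ι} (hi : i ∈ s) {A X : Set M}
    (hA : MeasurableSet A) (hX : MeasurableSet X) :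
    P.real ((∑ j ∈ s, ξ j) ⁻¹' X ∩ ξ i ⁻¹' A) =
      (convPow μ (#s - 1) ∗ μ.restrict A).real X := by
  classical
  have := h_indep.isProbabilityMeasure
  have h_law_pair := (h_indep.indepFun_finsetSum_of_notMem hξ
    (Finset.notMem_erase i s)).hasLaw_prod (hasLaw_sum_convPow h_indep hξ hlaw _) (hlaw i)
  have h_meas : MeasurableSet ((fun p : M × M => p.1 + p.2) ⁻¹' X ∩ univ ×ˢ A) :=
    (measurable_add hX).inter (.prod .univ hA)
  rw [measureReal_conv_restrict _ _ hX, ← Finset.card_erase_of_mem hi,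
    ← (h_law_pair.measurePreserving (by fun_prop)).measureReal_preimage h_meas.nullMeasurableSet,
    ← Finset.sum_erase_add s _ hi]
  congr 1
  ext ω
  simp

end IndependentSummands

theorem abs_measureReal_conv_restrict_sub_le {A X : Set M} (hA : MeasurableSet A)
    (hX : MeasurableSet X) (n : ℕ) :
    |(convPow μ n ∗ μ.restrict A).real X - μ.real A * (convPow μ (n + 1)).real X| ≤
      1 / (4 * √(n + 1)) := by
  obtain ⟨Ω, _, P, ξ, hξ, hlaw, h_indep, _⟩ := exists_iid (Fin (n + 1)) μ
  set δ := (convPow μ n ∗ μ.restrict A).real X - μ.real A * (convPow μ (n + 1)).real X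
  set S := ∑ i, ξ i
  have hS : Measurable S := by fun_prop
  have hS_law : HasLaw S (convPow μ (n + 1)) P := by
    simpa [S] using hasLaw_sum_convPow h_indep hξ hlaw Finset.univ
  have h_exchangeable (i : Fin (n + 1)) :
      P.real (S ⁻¹' X ∩ ξ i ⁻¹' A) - P.real (S ⁻¹' X) * P.real (ξ i ⁻¹' A) = δ := by
    rw [measureReal_sum_mem_inter_mem h_indep hξ hlaw (Finset.mem_univ i) hA hX,
      (hS_law.measurePreserving hS).measureReal_preimage hX.nullMeasurableSet,
      ((hlaw i).measurePreserving (hξ i)).measureReal_preimage hA.nullMeasurableSet,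
      Finset.card_fin, Nat.add_sub_cancel, mul_comm]
  have h_sq := sq_sum_measureReal_inter_sub_mul_le (s := Finset.univ) (hS hX) (fun i => hξ i hA)
    ((iIndepSet_iff_meas_biInter fun i => hξ i hA).2 fun s =>
      h_indep.meas_biInter fun i _ => ⟨A, hA, rfl⟩)
  simp only [h_exchangeable, Finset.sum_const, Finset.card_fin, nsmul_eq_mul, Nat.cast_add,
    Nat.cast_one, mul_pow] at h_sq
  refine abs_le_of_sq_le_sq ?_ (by positivity)
  rw [div_pow, mul_pow, Real.sq_sqrt (by positivity), le_div_iff₀ (by positivity)]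
  refine le_of_mul_le_mul_left ?_ (Nat.cast_add_one_pos (α := ℝ) n)
  linarith

end AddCommMonoid

end ConvPow

section Concentration

variable {ν : Measure ℝ} [IsProbabilityMeasure ν]

theorem measureReal_Icc_le_concFn (κ : Measure ℝ) [IsFiniteMeasure κ] (x b : ℝ) :
    κ.real (Icc x (x + b)) ≤ concFn κ b :=
  le_ciSup (f := fun x => κ.real (Icc x (x + b)))
    ⟨κ.real univ, forall_mem_range.2 fun _ => measureReal_mono (subset_univ _)⟩ x

theorem concFn_mono (κ : Measure ℝ) [IsFiniteMeasure κ] : Monotone (concFn κ) := fun b c hbc =>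
  ciSup_le fun x => (measureReal_mono (Icc_subset_Icc_right (by linarith))).trans
    (measureReal_Icc_le_concFn κ x c)

theorem concFn_add_le (κ : Measure ℝ) [IsFiniteMeasure κ] (b c : ℝ) :
    concFn κ (b + c) ≤ concFn κ b + concFn κ c :=
  ciSup_le fun x =>
    calc κ.real (Icc x (x + (b + c)))
        ≤ κ.real (Icc x (x + b) ∪ Icc (x + b) (x + b + c)) :=
          measureReal_mono (add_assoc x b c ▸ Icc_subset_Icc_union_Icc)
      _ ≤ κ.real (Icc x (x + b)) + κ.real (Icc (x + b) (x + b + c)) := measureReal_union_le _ _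
      _ ≤ concFn κ b + concFn κ c :=
          add_le_add (measureReal_Icc_le_concFn κ x b) (measureReal_Icc_le_concFn κ (x + b) c)

theorem concFn_succ_mul_le (κ : Measure ℝ) [IsFiniteMeasure κ] (k : ℕ) (b : ℝ) :
    concFn κ ((k + 1) * b) ≤ (k + 1) * concFn κ b := by
  induction k with
  | zero => simp
  | succ k ih =>
    rw [Nat.cast_succ, add_one_mul (k + 1 : ℝ) b, add_one_mul (k + 1 : ℝ)]
    linarith [concFn_add_le κ ((k + 1) * b) b]

theorem measure_Iic_mul_add_indicator_Icc_le {R : Type*} [LinearOrder R] [MeasurableSpace R]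
    [TopologicalSpace R] [OrderClosedTopology R] [OpensMeasurableSpace R] (ν : Measure R)
    [IsProbabilityMeasure ν] (u v y : R) :
    ν (Iic u) * ν (Iic y) + (Icc u v).indicator (fun _ => ν (Iic u) * ν (Ioi v)) y ≤
      ν (Iic y ∩ Iic u) := by
  rcases lt_or_ge y u with hyu | huy
  · rw [indicator_of_notMem (fun hy => hyu.not_ge hy.1), add_zero,
      inter_eq_left.2 (Iic_subset_Iic.2 hyu.le)]
    exact mul_le_of_le_one_left' prob_le_one
  rw [inter_eq_right.2 (Iic_subset_Iic.2 huy)]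
  by_cases hyv : y ≤ v
  · have h_disjoint : Disjoint (Iic y) (Ioi v) := Iic_disjoint_Ioi hyv
    rw [indicator_of_mem (mem_Icc.2 ⟨huy, hyv⟩), ← mul_add,
      ← measure_union h_disjoint measurableSet_Ioi]
    exact mul_le_of_le_one_right' prob_le_one
  · rw [indicator_of_notMem (fun hy => hyv hy.2), add_zero]
    exact mul_le_of_le_one_right' prob_le_one

theorem measure_conv_Iic_add_measure_Icc_le (κ ν : Measure ℝ) [IsFiniteMeasure κ]
    [IsProbabilityMeasure ν] (u v x : ℝ) :
    ν (Iic u) * (κ ∗ ν) (Iic (x + v)) + ν (Iic u) * ν (Ioi v) * κ (Icc x (x + (v - u))) ≤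
      (κ ∗ ν.restrict (Iic u)) (Iic (x + v)) := by
  have h_conv (ρ : Measure ℝ) [SFinite ρ] :
      (κ ∗ ρ) (Iic (x + v)) = ∫⁻ s, ρ (Iic (x + v - s)) ∂κ := by
    rw [Measure.conv, Measure.map_apply measurable_add measurableSet_Iic,
      Measure.prod_apply (measurable_add measurableSet_Iic)]
    congr! 3 with s
    ext y
    simp [le_sub_iff_add_le']
  have h_Icc (s : ℝ) : x + v - s ∈ Icc u v ↔ s ∈ Icc x (x + (v - u)) := by
    simp only [mem_Icc]
    constructor <;> rintro ⟨_, _⟩ <;> constructor <;> linarith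
  calc _ = ∫⁻ s, ν (Iic u) * ν (Iic (x + v - s)) +
        (Icc x (x + (v - u))).indicator (fun _ => ν (Iic u) * ν (Ioi v)) s ∂κ := by
        rw [lintegral_add_right _ (measurable_const.indicator measurableSet_Icc),
          lintegral_indicator_const measurableSet_Icc, lintegral_const_mul' _ _ (by finiteness),
          h_conv ν]
    _ ≤ ∫⁻ s, ν.restrict (Iic u) (Iic (x + v - s)) ∂κ := by
        refine lintegral_mono fun s => ?_
        rw [Measure.restrict_apply measurableSet_Iic]
        refine le_trans (le_of_eq ?_) (measure_Iic_mul_add_indicator_Icc_le ν u v (x + v - s))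
        simp only [indicator, h_Icc]
    _ = _ := (h_conv _).symm

theorem measureReal_mul_concFn_convPow_le (n : ℕ) (u v : ℝ) :
    ν.real (Iic u) * ν.real (Ioi v) * concFn (convPow ν n) (v - u) ≤ 1 / (4 * √(n + 1)) := by
  rw [concFn, Real.mul_iSup_of_nonneg (by positivity)]
  refine ciSup_le fun x => ?_
  have h_decorrelation := (abs_le.1 (abs_measureReal_conv_restrict_sub_le (μ := ν)
    (measurableSet_Iic (a := u)) (measurableSet_Iic (a := x + v)) n)).2
  have h_Icc := ENNReal.toReal_mono (by finiteness)
    (measure_conv_Iic_add_measure_Icc_le (convPow ν n) ν u v x)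
  rw [ENNReal.toReal_add (by finiteness) (by finiteness)] at h_Icc
  simp only [ENNReal.toReal_mul, ← measureReal_def] at h_Icc
  rw [convPow_succ] at h_decorrelation
  rw [← measureReal_def]
  linarith

theorem exists_lt_measure_Iic_pos_measure_Ioi_pos (hν : ¬∃ a, ν = Measure.dirac a) :
    ∃ u v, u < v ∧ 0 < ν (Iic u) ∧ 0 < ν (Ioi v) := by
  obtain ⟨x, hx, y, hy, hxy⟩ : ν.support.Nontrivial := by
    rw [← not_subsingleton_iff]
    intro h_subsingleton
    obtain ⟨a, ha⟩ := ν.nonempty_support (IsProbabilityMeasure.ne_zero ν)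
    refine hν ⟨a, ?_⟩
    have h_ae : id =ᵐ[ν] fun _ => a := by
      filter_upwards [ν.support_mem_ae] with x hx using h_subsingleton hx ha
    simpa using (hasLaw_dirac_of_ae_eq h_ae).map_eq
  wlog h_lt : x < y generalizing x y
  · exact this y hy x hx hxy.symm (hxy.symm.lt_of_le (not_lt.1 h_lt))
  obtain ⟨u, hxu, huy⟩ := exists_between h_lt
  obtain ⟨v, huv, hvy⟩ := exists_between huy
  rw [Measure.mem_support_iff_forall] at hx hy
  exact ⟨u, v, huv, hx _ (Iic_mem_nhds hxu), hy _ (Ioi_mem_nhds hvy)⟩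

theorem exists_concFn_convPow_le (hν : ¬∃ a, ν = Measure.dirac a) (b : ℝ) :
    ∃ C, 0 ≤ C ∧ ∀ n, concFn (convPow ν n) b ≤ C / √(n + 1) := by
  obtain ⟨u, v, huv, hu, hv⟩ := exists_lt_measure_Iic_pos_measure_Ioi_pos hν
  obtain ⟨k, hk⟩ := exists_nat_ge (b / (v - u))
  have h_pos : 0 < ν.real (Iic u) * ν.real (Ioi v) :=
    mul_pos (ENNReal.toReal_pos hu.ne' (by finiteness)) (ENNReal.toReal_pos hv.ne' (by finiteness))
  have hb : b ≤ (k + 1) * (v - u) := by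
    rw [div_le_iff₀ (sub_pos.2 huv)] at hk
    linarith
  refine ⟨(k + 1) * (1 / (4 * (ν.real (Iic u) * ν.real (Ioi v)))), by positivity, fun n => ?_⟩
  calc concFn (convPow ν n) b ≤ concFn (convPow ν n) ((k + 1) * (v - u)) := concFn_mono _ hb
    _ ≤ (k + 1) * concFn (convPow ν n) (v - u) := concFn_succ_mul_le _ k _
    _ ≤ (k + 1) * (1 / (4 * √(n + 1)) / (ν.real (Iic u) * ν.real (Ioi v))) := by
        gcongr
        exact (le_div_iff₀' h_pos).2 (measureReal_mul_concFn_convPow_le n u v)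
    _ = _ := by field_simp

end Concentration

section ShiftBoundary

/-- The points `s` that some shift `x ∈ B` moves into or out of `X`. For a bounded `B` this plays
the role of a neighbourhood of the topological boundary of `X`. -/
def shiftBoundary {M : Type*} [Add M] (X B : Set M) : Set M :=
  {s | ∃ x ∈ B, ¬(s + x ∈ X ↔ s ∈ X)}

theorem shiftBoundary_mono_right {M : Type*} [Add M] {X B B' : Set M} (h : B ⊆ B') :
    shiftBoundary X B ⊆ shiftBoundary X B' :=
  fun _ ⟨x, hx, hsx⟩ => ⟨x, h hx, hsx⟩

theorem shiftBoundary_singleton_zero {M : Type*} [AddZeroClass M] (X : Set M) :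
    shiftBoundary X {0} = ∅ := by
  ext s
  simp [shiftBoundary]

theorem shiftBoundary_iInter_preimage_subset {M N ι : Type*} [AddZeroClass M] [AddZeroClass N]
    (T : ι → M →+ N) (I K : ι → Set N) :
    shiftBoundary (⋂ j, T j ⁻¹' I j) (⋂ j, T j ⁻¹' K j) ⊆
      ⋃ j, T j ⁻¹' shiftBoundary (I j) (K j) := by
  rintro s ⟨x, hxK, hsx⟩
  contrapose! hsx
  simp only [mem_iUnion, mem_preimage, shiftBoundary, mem_ofPred_eq, not_exists, not_and,
    not_not, mem_iInter, map_add] at hsx hxK ⊢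
  exact forall_congr' fun j => hsx j (T j x) (hxK j)

theorem dist_toReal_le_of_mem_uIcc {s y : ℝ} {a : EReal} (ha : a ∈ uIcc (s : EReal) y) :
    dist s a.toReal ≤ dist s y := by
  induction a with
  | bot => simp [mem_uIcc] at ha
  | top => simp [mem_uIcc] at ha
  | coe a =>
    simp only [mem_uIcc, EReal.coe_le_coe_iff] at ha
    exact Real.dist_left_le_of_mem_uIcc (mem_uIcc.2 ha)

theorem mem_uIcc_or_mem_uIcc_of_not_mem_Icc_iff {α : Type*} [LinearOrder α] {a b s y : α}
    (h : ¬(y ∈ Icc a b ↔ s ∈ Icc a b)) : a ∈ uIcc s y ∨ b ∈ uIcc s y := by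
  simp only [mem_Icc, mem_uIcc] at *
  grind

theorem shiftBoundary_preimage_Icc_subset (a b : EReal) (r : ℝ) :
    shiftBoundary ((↑) ⁻¹' Icc a b : Set ℝ) (closedBall 0 r) ⊆
      closedBall a.toReal r ∪ closedBall b.toReal r := by
  rintro s ⟨x, hx, hsx⟩
  have hr : dist s (s + x) ≤ r := by simpa using hx
  exact (mem_uIcc_or_mem_uIcc_of_not_mem_Icc_iff hsx).imp
    (fun ha => (dist_toReal_le_of_mem_uIcc ha).trans hr)
    (fun hb => (dist_toReal_le_of_mem_uIcc hb).trans hr)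

end ShiftBoundary

section ConditionedStep

variable {M : Type*} [MeasurableSpace M]

theorem abs_measureReal_conv_restrict_sub_le_shiftBoundary [AddMonoid M] [MeasurableAdd₂ M]
    (κ μ : Measure M) [IsFiniteMeasure κ] [IsFiniteMeasure μ] {B X : Set M}
    (hB : MeasurableSet B) (hX : MeasurableSet X) :
    |(κ ∗ μ.restrict B).real X - μ.real B * κ.real X| ≤ μ.real B * κ.real (shiftBoundary X B) := by
  have h_symmDiff : symmDiff ((fun p : M × M => p.1 + p.2) ⁻¹' X ∩ univ ×ˢ B) (X ×ˢ B) ⊆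
      shiftBoundary X B ×ˢ B := by
    rintro ⟨s, x⟩ h
    simp only [mem_symmDiff, mem_inter_iff, mem_preimage, mem_prod, mem_univ, true_and] at h
    have hx : x ∈ B := by tauto
    exact ⟨⟨x, hx, by tauto⟩, hx⟩
  rw [measureReal_conv_restrict _ _ hX, mul_comm, mul_comm (μ.real B), ← measureReal_prod_prod,
    ← measureReal_prod_prod]
  exact (abs_measureReal_sub_le_measureReal_symmDiff
    (((measurable_add hX).inter (.prod .univ hB)).nullMeasurableSet)
    (hX.prod hB).nullMeasurableSet).trans (measureReal_mono h_symmDiff)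

theorem abs_measureReal_convPow_sub_convPow_succ_le [AddCommMonoid M] [MeasurableAdd₂ M]
    {μ : Measure M} [IsProbabilityMeasure μ] {B X : Set M} (hB : MeasurableSet B)
    (hB_pos : 0 < μ.real B) (hX : MeasurableSet X) (n : ℕ) :
    |(convPow μ n).real X - (convPow μ (n + 1)).real X| ≤
      1 / (4 * μ.real B) / √(n + 1) + (convPow μ n).real (shiftBoundary X B) := by
  have h_step := abs_measureReal_conv_restrict_sub_le_shiftBoundary (convPow μ n) μ hB hX
  have h_decorrelation := abs_measureReal_conv_restrict_sub_le (μ := μ) hB hX n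
  refine le_of_mul_le_mul_left ?_ hB_pos
  calc μ.real B * |(convPow μ n).real X - (convPow μ (n + 1)).real X|
      = |μ.real B * (convPow μ n).real X - μ.real B * (convPow μ (n + 1)).real X| := by
        rw [← mul_sub, abs_mul, abs_of_pos hB_pos]
    _ ≤ μ.real B * (convPow μ n).real (shiftBoundary X B) + 1 / (4 * √(n + 1)) := by
        refine (abs_sub_le _ ((convPow μ n ∗ μ.restrict B).real X) _).trans ?_
        rw [abs_sub_comm]
        exact add_le_add h_step h_decorrelation
    _ = _ := by field_simp; ring

end ConditionedStep

section Polyhedra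

theorem exists_convPow_shiftBoundary_Icc_le (ν : Measure ℝ) [IsProbabilityMeasure ν]
    (hν : (¬∃ a, ν = Measure.dirac a) ∨ ν = Measure.dirac 0) (r : ℝ) :
    ∃ C, 0 ≤ C ∧ ∀ (n : ℕ) (a b : EReal),
      (convPow ν n).real (shiftBoundary ((↑) ⁻¹' Icc a b) (closedBall 0 r ∩ ν.support)) ≤
        C / √(n + 1) := by
  rcases hν with hν | rfl
  · obtain ⟨C, hC, h_concFn⟩ := exists_concFn_convPow_le hν (2 * r)
    refine ⟨2 * C, by positivity, fun n a b => ?_⟩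
    have h_ball (c : ℝ) : (convPow ν n).real (closedBall c r) ≤ C / √(n + 1) := by
      rw [Real.closedBall_eq_Icc, show c + r = c - r + 2 * r by ring]
      exact (measureReal_Icc_le_concFn _ _ _).trans (h_concFn n)
    calc _ ≤ (convPow ν n).real (closedBall a.toReal r ∪ closedBall b.toReal r) :=
          measureReal_mono ((shiftBoundary_mono_right inter_subset_left).trans
            (shiftBoundary_preimage_Icc_subset a b r))
      _ ≤ C / √(n + 1) + C / √(n + 1) :=
          (measureReal_union_le _ _).trans (add_le_add (h_ball _) (h_ball _))
      _ = 2 * C / √(n + 1) := by ring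
  · refine ⟨0, le_rfl, fun n a b => ?_⟩
    have h_support : (Measure.dirac (0 : ℝ)).support ⊆ {0} :=
      Measure.support_subset_of_isClosed isClosed_singleton (by simp [ae_dirac_eq])
    have h_empty := (shiftBoundary_mono_right (X := (↑) ⁻¹' Icc a b)
      (inter_subset_right (s := closedBall 0 r).trans h_support)).trans
      (shiftBoundary_singleton_zero _).subset
    simp [subset_empty_iff.1 h_empty]

theorem exists_measure_iInter_preimage_closedBall_inter_support_pos {Ω ι E : Type*} [Finite ι]
    [SeminormedAddGroup E] [HereditarilyLindelofSpace E] [MeasurableSpace E]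
    [OpensMeasurableSpace E] [MeasurableSpace Ω] (P : Measure Ω) [NeZero P] {f : ι → Ω → E}
    (hf : ∀ j, AEMeasurable (f j) P) :
    ∃ r : ℝ, 0 < P (⋂ j, f j ⁻¹' (closedBall 0 r ∩ (P.map (f j)).support)) := by
  have h_support : ∀ᵐ x ∂P, ∀ j, f j x ∈ (P.map (f j)).support :=
    ae_all_iff.2 fun j => ae_of_ae_map (hf j) Measure.support_mem_ae
  have h_iUnion : P (⋃ r : ℕ, ⋂ j, f j ⁻¹' (closedBall 0 r ∩ (P.map (f j)).support)) ≠ 0 := by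
    intro h_null
    obtain ⟨x, hx, hx_notMem⟩ := (h_support.and (measure_eq_zero_iff_ae_notMem.1 h_null)).exists
    obtain ⟨c, hc⟩ := Finite.bddAbove_range fun j => ‖f j x‖
    obtain ⟨r, hr⟩ := exists_nat_ge c
    exact hx_notMem (mem_iUnion.2 ⟨r, mem_iInter.2 fun j =>
      ⟨mem_closedBall_zero_iff.2 ((hc (mem_range_self j)).trans hr), hx j⟩⟩)
  obtain ⟨r, hr⟩ := exists_measure_pos_of_not_measure_iUnion_null h_iUnion
  exact ⟨r, hr⟩

theorem measureReal_convPow_shiftBoundary_iInter_le {M N ι : Type*} [AddMonoid M]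
    [MeasurableSpace M] [MeasurableAdd₂ M] [AddMonoid N] [MeasurableSpace N] [MeasurableAdd₂ N]
    [Fintype ι] {μ : Measure M} [IsProbabilityMeasure μ] (T : ι → M →+ N)
    (hT : ∀ j, Measurable (T j)) (I K : ι → Set N) (n : ℕ) :
    (convPow μ n).real (shiftBoundary (⋂ j, T j ⁻¹' I j) (⋂ j, T j ⁻¹' K j)) ≤
      ∑ j, (convPow (μ.map (T j)) n).real (shiftBoundary (I j) (K j)) := by
  calc _ ≤ (convPow μ n).real (⋃ j, T j ⁻¹' shiftBoundary (I j) (K j)) :=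
        measureReal_mono (shiftBoundary_iInter_preimage_subset T I K)
    _ ≤ ∑ j, (convPow μ n).real (T j ⁻¹' shiftBoundary (I j) (K j)) :=
        measureReal_iUnion_fintype_le _
    _ ≤ _ := by
        gcongr with j
        rw [← map_convPow (T j) (hT j)]
        have := Measure.isProbabilityMeasure_map (μ := convPow μ n) (hT j).aemeasurable
        exact ENNReal.toReal_mono (by finiteness) (Measure.le_map_apply (hT j).aemeasurable _)

theorem stmt13_general {M ι : Type*} [AddCommMonoid M] [MeasurableSpace M] [MeasurableAdd₂ M]
    [Finite ι] (F : Measure M) [IsProbabilityMeasure F] (T : ι → M →+ ℝ)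
    (hT : ∀ j, Measurable (T j))
    (h : ∀ j, (¬∃ a, F.map (T j) = Measure.dirac a) ∨ F.map (T j) = Measure.dirac 0) :
    ∃ C : ℝ, 0 < C ∧ ∀ n : ℕ, 0 < n → ∀ a b : ι → EReal,
      |(convPow F n).real {x | ∀ j, (T j x : EReal) ∈ Icc (a j) (b j)} -
        (convPow F (n + 1)).real {x | ∀ j, (T j x : EReal) ∈ Icc (a j) (b j)}| ≤ C / √n := by
  cases nonempty_fintype ι
  obtain ⟨r, hB_pos⟩ := exists_measure_iInter_preimage_closedBall_inter_support_pos F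
    fun j => (hT j).aemeasurable
  set K := fun j => closedBall 0 r ∩ (F.map (T j)).support
  set B := ⋂ j, T j ⁻¹' K j
  have hB : MeasurableSet B := .iInter fun j =>
    hT j (measurableSet_closedBall.inter Measure.isClosed_support.measurableSet)
  replace hB_pos : 0 < F.real B := ENNReal.toReal_pos hB_pos.ne' (by finiteness)
  have (j : ι) := Measure.isProbabilityMeasure_map (μ := F) (hT j).aemeasurable
  choose D hD h_slab using fun j => exists_convPow_shiftBoundary_Icc_le (F.map (T j)) (h j) r
  have hC : 0 < 1 / (4 * F.real B) + ∑ j, D j :=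
    add_pos_of_pos_of_nonneg (by positivity) (Finset.sum_nonneg fun j _ => hD j)
  refine ⟨_, hC, fun n hn a b => ?_⟩
  set I := fun j => ((↑) ⁻¹' Icc (a j) (b j) : Set ℝ)
  have hX : MeasurableSet (⋂ j, T j ⁻¹' I j) :=
    .iInter fun j => hT j (measurable_coe_real_ereal measurableSet_Icc)
  rw [show {x | ∀ j, (T j x : EReal) ∈ Icc (a j) (b j)} = ⋂ j, T j ⁻¹' I j by ext; simp [I]]
  calc _ ≤ 1 / (4 * F.real B) / √(n + 1) +
        (convPow F n).real (shiftBoundary (⋂ j, T j ⁻¹' I j) B) :=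
        abs_measureReal_convPow_sub_convPow_succ_le hB hB_pos hX n
    _ ≤ 1 / (4 * F.real B) / √(n + 1) + ∑ j, D j / √(n + 1) := by
        gcongr
        exact (measureReal_convPow_shiftBoundary_iInter_le T hT I K n).trans
          (Finset.sum_le_sum fun j _ => h_slab j n (a j) (b j))
    _ = (1 / (4 * F.real B) + ∑ j, D j) / √(n + 1) := by rw [add_div, Finset.sum_div]
    _ ≤ (1 / (4 * F.real B) + ∑ j, D j) / √n := by
        gcongr
        linarith

end Polyhedra

end

theorem stmt13 (d m : ℕ) (F : Measure (Euc d)) (hF : IsProbabilityMeasure F)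
    (t : Fin m → Euc d)
    (ht : ∀ j, (¬ ∃ a : ℝ, F.map (fun x => ⟪x, t j⟫) = Measure.dirac a) ∨
      F.map (fun x => ⟪x, t j⟫) = Measure.dirac (0 : ℝ)) :
    ∃ C : ℝ, 0 < C ∧ ∀ n : ℕ, 0 < n → ∀ X ∈ polyhedraOn t,
      |((convPow F n) X).toReal - ((convPow F (n + 1)) X).toReal| ≤ C / Real.sqrt n := by
  obtain ⟨C, hC, h⟩ := stmt13_general F
    (fun j => .mk' (fun x => ⟪x, t j⟫) fun x y => inner_add_left x y (t j))
    (fun j => (continuous_id.inner continuous_const).measurable) ht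
  exact ⟨C, hC, by rintro n hn _ ⟨a, b, rfl⟩; exact h n hn a b⟩
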